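/- arXiv:2106.02068 — 2 statements merged into one kernel-verified Lean document; each statement's English description precedes it below -/
import Mathlib

section
/- Let u, α, δ be real numbers with α > 0, 0 < u < 1 and |δ| ≤ u. Then α(1−u) < α·√(1+δ) < α(1+u). Consequently |α·√(1+δ) − α| < u·α, while |α·√(1+δ) − α(1−2u)| > u·α and |α·√(1+δ) − α(1+2u)| > u·α; that is, among the three points α(1−2u), α, α(1+2u), the point α is the strictly nearest one to α·√(1+δ). -/
/-- Let `u, α, δ` be real numbers with `α > 0`, `0 < u < 1` and `|δ| ≤ u`.
Then `α(1−u) < α·√(1+δ) < α(1+u)`. Consequently `|α·√(1+δ) − α| < u·α`, while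
`|α·√(1+δ) − α(1−2u)| > u·α` and `|α·√(1+δ) − α(1+2u)| > u·α`; that is, among the three
points `α(1−2u), α, α(1+2u)`, the point `α` is the strictly nearest one to `α·√(1+δ)`. -/
theorem stmt_0 (u α δ : ℝ) (hα : 0 < α) (hu0 : 0 < u) (hu1 : u < 1) (hδ : |δ| ≤ u) :
    α * (1 - u) < α * Real.sqrt (1 + δ) ∧
    α * Real.sqrt (1 + δ) < α * (1 + u) ∧
    |α * Real.sqrt (1 + δ) - α| < u * α ∧
    |α * Real.sqrt (1 + δ) - α * (1 - 2 * u)| > u * α ∧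
    |α * Real.sqrt (1 + δ) - α * (1 + 2 * u)| > u * α := by
  obtain ⟨h1, h2⟩ := abs_le.mp hδ
  have a : 1 - u < Real.sqrt (1 + δ) := by
    apply Real.lt_sqrt_of_sq_lt
    nlinarith
  have b : Real.sqrt (1 + δ) < 1 + u := by
    rw [Real.sqrt_lt' (by linarith)]
    nlinarith
  have A := mul_lt_mul_of_pos_left a hα
  have B := mul_lt_mul_of_pos_left b hα
  refine ⟨A, B, ?_, ?_, ?_⟩
  · rw [abs_lt]
    constructor <;> nlinarith
  · refine lt_of_lt_of_le ?_ (le_abs_self _)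
    nlinarith
  · refine lt_of_lt_of_le ?_ (neg_le_abs _)
    nlinarith
end

section
/- Let n = m·p and let P be an n×n signed block permutation matrix with p×p blocks (a block permutation matrix whose nonzero p×p blocks are signed permutation matrices). Let T be an n×n block tridiagonal matrix with p×p blocks, with symmetric diagonal blocks M̃₁,…,M̃_m and with subdiagonal blocks B̃₂,…,B̃_m that are upper triangular with positive diagonal entries (and superdiagonal blocks B̃_{i+1}ᵀ). Put A = P T Pᵀ and U₁ = P E₁, where E_i ∈ ℝ^{n×p} denotes the i-th block column of the n×n identity matrix. Then the exact block Lanczos algorithm applied to (A, U₁), in which each QR factorization R_{i+1} = U_{i+1} B_{i+1} is chosen with U_{i+1} having orthonormal columns and B_{i+1} upper triangular with positive diagonal entries, produces U_i = P E_i, M_i = M̃_i, and B_i = B̃_i for all i = 1, …, m; in particular the block tridiagonal matrix T_m generated by the algorithm equals T. -/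
open Matrix

/-- A signed permutation matrix: exactly one nonzero entry in each row and column,
each nonzero entry being `+1` or `−1`. -/
def IsSignedPerm {p : ℕ} (Q : Matrix (Fin p) (Fin p) ℝ) : Prop :=
  ∃ (π : Equiv.Perm (Fin p)) (ε : Fin p → ℝ), (∀ j, ε j = 1 ∨ ε j = -1) ∧
    ∀ i j, Q i j = if i = π j then ε j else 0

/-- A signed block permutation matrix with `p×p` blocks (indexed by `Fin m × Fin p`):
a block permutation matrix whose nonzero `p×p` blocks are signed permutation matrices. -/
def IsSignedBlockPerm {m p : ℕ} (P : Matrix (Fin m × Fin p) (Fin m × Fin p) ℝ) : Prop :=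
  ∃ (σ : Equiv.Perm (Fin m)) (Q : Fin m → Matrix (Fin p) (Fin p) ℝ),
    (∀ j, IsSignedPerm (Q j)) ∧
    ∀ (i j : Fin m) (a b : Fin p), P (i, a) (j, b) = if i = σ j then Q j a b else 0

/-- The `i`-th block column `Eᵢ ∈ ℝ^{n×p}` of the `n×n` identity matrix (`n = m·p`). -/
def blockE (m p : ℕ) (i : Fin m) : Matrix (Fin m × Fin p) (Fin p) ℝ :=
  Matrix.of fun r c => if r = (i, c) then 1 else 0

theorem aux_orth {m p : ℕ} (P : Matrix (Fin m × Fin p) (Fin m × Fin p) ℝ)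
    (hP : IsSignedBlockPerm P) : Pᵀ * P = 1 := by
  obtain ⟨σ, Q, hQ, hP⟩ := hP
  have hQQ : ∀ j, (Q j)ᵀ * Q j = 1 := by
    intro j
    obtain ⟨π, ε, hε, h⟩ := hQ j
    ext a b
    simp only [Matrix.mul_apply, Matrix.transpose_apply, h, Matrix.one_apply]
    by_cases hab : a = b
    · subst hab
      rcases hε a with h1 | h1 <;> simp [h1]
    · have : ∀ x, (if x = π a then ε a else 0) * (if x = π b then ε b else 0) = 0 := by
        intro x
        by_cases hx : x = π a
        · subst hx; simp [hab]
        · simp [hx]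
      simp [this, hab]
  ext ⟨i, a⟩ ⟨j, b⟩
  simp only [Matrix.mul_apply, Matrix.transpose_apply, Fintype.sum_prod_type, hP]
  by_cases hij : i = j
  · subst hij
    have := congrFun (congrFun (hQQ i) a) b
    simp only [Matrix.mul_apply, Matrix.transpose_apply, Matrix.one_apply] at this
    rw [Finset.sum_eq_single (σ i)]
    · simp [this, Matrix.one_apply]
    · intro x _ hx; simp [hx]
    · simp
  · have : ∀ x y, (if x = σ i then Q i y a else 0) * (if x = σ j then Q j y b else 0) = 0 := by
      intro x y
      by_cases hx : x = σ i
      · subst hx; simp [hij]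
      · simp [hx]
    simp [this, hij, Matrix.one_apply]

theorem aux_qr {ι : Type*} [Fintype ι] {p : ℕ} (U V : Matrix ι (Fin p) ℝ)
    (B C : Matrix (Fin p) (Fin p) ℝ) (hU : Uᵀ * U = 1) (hV : Vᵀ * V = 1)
    (hB : ∀ a b : Fin p, (b : ℕ) < (a : ℕ) → B a b = 0)
    (hC : ∀ a b : Fin p, (b : ℕ) < (a : ℕ) → C a b = 0)
    (hBp : ∀ a, 0 < B a a) (hCp : ∀ a, 0 < C a a) (h : U * B = V * C) :
    U = V ∧ B = C := by
  have hBt : B.BlockTriangular id := fun a b hab => hB a b hab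
  have hCt : C.BlockTriangular id := fun a b hab => hC a b hab
  have hBd : IsUnit B.det := by
    rw [Matrix.det_of_upperTriangular hBt]
    exact (Finset.prod_pos fun a _ => hBp a).ne'.isUnit
  haveI : Invertible B := Matrix.invertibleOfIsUnitDet B hBd
  have hBi : B⁻¹.BlockTriangular id := Matrix.blockTriangular_inv_of_blockTriangular hBt
  obtain ⟨W, hW⟩ : ∃ W, W = C * B⁻¹ := ⟨_, rfl⟩
  have hWt : W.BlockTriangular id := hW ▸ hCt.mul hBi
  have hUW : U = V * W := by
    rw [hW, ← Matrix.mul_assoc, ← h, Matrix.mul_assoc, Matrix.mul_nonsing_inv _ hBd, Matrix.mul_one]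
  have hWB : W * B = C := by
    rw [hW, Matrix.mul_assoc, Matrix.nonsing_inv_mul _ hBd, Matrix.mul_one]
  have hWW : Wᵀ * W = 1 := by
    rw [hUW, Matrix.transpose_mul, Matrix.mul_assoc, ← Matrix.mul_assoc Vᵀ, hV,
      Matrix.one_mul] at hU
    exact hU
  have : Invertible W := Matrix.invertibleOfIsUnitDet W (Matrix.isUnit_det_of_left_inverse hWW)
  have hWi : W⁻¹.BlockTriangular id := Matrix.blockTriangular_inv_of_blockTriangular hWt
  rw [Matrix.inv_eq_left_inv hWW] at hWi
  have hoff : ∀ a b, a ≠ b → W a b = 0 := by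
    intro a b hab
    rcases lt_or_gt_of_ne hab with h1 | h1
    · exact hWi h1
    · exact hWt h1
  have hdiag : ∀ a, W a a = 1 := by
    intro a
    have h1 := congrFun (congrFun hWW a) a
    have h2 := congrFun (congrFun hWB a) a
    rw [Matrix.mul_apply, Finset.sum_eq_single a] at h1 h2
    · simp at h1
      have h3 := hBp a
      have h4 := hCp a
      rw [← h2] at h4
      have h5 : 0 < W a a := (pos_iff_pos_of_mul_pos h4).2 h3
      nlinarith
    · intro b _ hb; rw [hoff a b hb.symm, zero_mul]
    · simp
    · intro b _ hb; rw [hoff b a hb, mul_zero]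
    · simp
  have hW1 : W = 1 := by
    ext a b
    by_cases hab : a = b
    · subst hab; simp [hdiag]
    · simp [hab, hoff a b hab]
  subst hW1
  exact ⟨by simpa using hUW, by simpa using hWB⟩

theorem aux_E {m p : ℕ} (k : Fin m) (X : Matrix (Fin p) (Fin p) ℝ) (r : Fin m) (a b : Fin p) :
    (blockE m p k * X) (r, a) b = if r = k then X a b else 0 := by
  simp only [Matrix.mul_apply, blockE, Matrix.of_apply, Prod.mk.injEq]
  by_cases h : r = k <;> simp [h]

theorem aux_TE {m p : ℕ} {κ : Type*} (X : Matrix κ (Fin m × Fin p) ℝ) (k : Fin m) (r : κ)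
    (b : Fin p) : (X * blockE m p k) r b = X r (k, b) := by
  simp [Matrix.mul_apply, blockE]

theorem aux_EE {m p : ℕ} (k : Fin m) : (blockE m p k)ᵀ * blockE m p k = 1 := by
  ext a b
  rw [aux_TE]
  simp [blockE, Matrix.one_apply, eq_comm]

theorem aux_ETE {m p : ℕ} (T : Matrix (Fin m × Fin p) (Fin m × Fin p) ℝ) (i j : Fin m)
    (a b : Fin p) : ((blockE m p i)ᵀ * T * blockE m p j) a b = T (i, a) (j, b) := by
  rw [aux_TE]
  simp [Matrix.mul_apply, blockE]

/-- Let `n = m·p` and let `P` be an `n×n` signed block permutation matrix with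
`p×p` blocks.  Let `T` be an `n×n` block tridiagonal matrix with symmetric diagonal blocks
`M̃₁,…,M̃ₘ` and subdiagonal blocks `B̃₂,…,B̃ₘ` that are upper triangular with positive diagonal
entries (and superdiagonal blocks `B̃ᵢ₊₁ᵀ`).  Put `A = P T Pᵀ` and `U₁ = P E₁`.  Then the exact
block Lanczos algorithm applied to `(A, U₁)` — i.e. any sequences `U`, `M`, `B` satisfying
`U₀ = U₁`, `B₁ = 0`, `Mᵢ = Uᵢᵀ A Uᵢ`, and `Uᵢ₊₁ Bᵢ₊₁ = A Uᵢ − Uᵢ Mᵢ − Uᵢ₋₁ Bᵢᵀ` where each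
`Uᵢ₊₁` has orthonormal columns and each `Bᵢ₊₁` is upper triangular with positive diagonal —
produces `Uᵢ = P Eᵢ`, `Mᵢ = M̃ᵢ`, and `Bᵢ = B̃ᵢ` for all `i = 1,…,m`; in particular the block
tridiagonal matrix `Tₘ` generated by the algorithm equals `T`.
(Here the index set `Fin m × Fin p` encodes `Fin (m·p)` blockwise: `M̃ᵢ = (T ((i,·),(i,·)))`
and `B̃ᵢ₊₁ = (T ((i+1,·),(i,·)))`.) -/
theorem stmt_9 {m p : ℕ} (hm : 0 < m)
    (P T : Matrix (Fin m × Fin p) (Fin m × Fin p) ℝ)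
    (hP : IsSignedBlockPerm P)
    (hTsym : Tᵀ = T)
    (hTtri : ∀ (i j : Fin m) (a b : Fin p),
      ((i : ℕ) + 1 < (j : ℕ) ∨ (j : ℕ) + 1 < (i : ℕ)) → T (i, a) (j, b) = 0)
    (hTsubTri : ∀ (i j : Fin m) (a b : Fin p),
      (i : ℕ) = (j : ℕ) + 1 → (b : ℕ) < (a : ℕ) → T (i, a) (j, b) = 0)
    (hTsubPos : ∀ (i j : Fin m) (a : Fin p), (i : ℕ) = (j : ℕ) + 1 → 0 < T (i, a) (j, a))
    (A : Matrix (Fin m × Fin p) (Fin m × Fin p) ℝ) (hA : A = P * T * Pᵀ)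
    (U : ℕ → Matrix (Fin m × Fin p) (Fin p) ℝ)
    (B M : ℕ → Matrix (Fin p) (Fin p) ℝ)
    (hU1 : U 1 = P * blockE m p ⟨0, hm⟩)
    (hU0 : U 0 = U 1)
    (hB1 : B 1 = 0)
    (hM : ∀ i, 1 ≤ i → i ≤ m → M i = (U i)ᵀ * A * U i)
    (hQR : ∀ i, 1 ≤ i → i + 1 ≤ m →
      U (i + 1) * B (i + 1) = A * U i - U i * M i - U (i - 1) * (B i)ᵀ)
    (hUorth : ∀ i, 2 ≤ i → i ≤ m → (U i)ᵀ * U i = 1)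
    (hBtri : ∀ i, 2 ≤ i → i ≤ m → ∀ a b : Fin p, (b : ℕ) < (a : ℕ) → B i a b = 0)
    (hBpos : ∀ i, 2 ≤ i → i ≤ m → ∀ a : Fin p, 0 < B i a a) :
    (∀ i : Fin m, U ((i : ℕ) + 1) = P * blockE m p i) ∧
    (∀ (i : Fin m) (a b : Fin p), M ((i : ℕ) + 1) a b = T (i, a) (i, b)) ∧
    (∀ (i : Fin m) (h : (i : ℕ) + 1 < m) (a b : Fin p),
      B ((i : ℕ) + 2) a b = T (⟨(i : ℕ) + 1, h⟩, a) (i, b)) := by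
  have hPP := aux_orth P hP
  have hAP : A * P = P * T := by rw [hA, Matrix.mul_assoc, hPP, Matrix.mul_one]
  have hPA : Pᵀ * A = T * Pᵀ := by
    rw [hA, Matrix.mul_assoc, ← Matrix.mul_assoc, hPP, Matrix.one_mul]
  have hMk : ∀ (k : ℕ) (hk : k < m), U (k + 1) = P * blockE m p ⟨k, hk⟩ →
      M (k + 1) = (blockE m p ⟨k, hk⟩)ᵀ * T * blockE m p ⟨k, hk⟩ := by
    intro k hk h
    rw [hM (k + 1) (by omega) (by omega), h, Matrix.transpose_mul, Matrix.mul_assoc _ Pᵀ A, hPA]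
    simp only [Matrix.mul_assoc]
    rw [← Matrix.mul_assoc Pᵀ, hPP, Matrix.one_mul]
  have hsymm : ∀ x y, T x y = T y x := fun x y => congrFun (congrFun hTsym y) x
  have hstep : ∀ (k : ℕ) (hk : k + 1 < m),
      U (k + 1) = P * blockE m p ⟨k, by omega⟩ →
      U k * (B (k + 1))ᵀ = P * (T * blockE m p ⟨k, by omega⟩
        - blockE m p ⟨k, by omega⟩ * ((blockE m p ⟨k, by omega⟩)ᵀ * T * blockE m p ⟨k, by omega⟩)
        - blockE m p ⟨k + 1, hk⟩ *
          ((blockE m p ⟨k + 1, hk⟩)ᵀ * T * blockE m p ⟨k, by omega⟩)) →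
      U (k + 2) = P * blockE m p ⟨k + 1, hk⟩ ∧
      B (k + 2) = (blockE m p ⟨k + 1, hk⟩)ᵀ * T * blockE m p ⟨k, by omega⟩ := by
    intro k hk hU hUB
    apply aux_qr
    · exact hUorth _ (by omega) (by omega)
    · rw [Matrix.transpose_mul, Matrix.mul_assoc, ← Matrix.mul_assoc Pᵀ, hPP, Matrix.one_mul,
        aux_EE]
    · exact hBtri _ (by omega) (by omega)
    · intro a b hab
      rw [aux_ETE]
      exact hTsubTri _ _ _ _ rfl hab
    · exact hBpos _ (by omega) (by omega)
    · intro a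
      rw [aux_ETE]
      exact hTsubPos _ _ _ rfl
    · have := hQR (k + 1) (by omega) (by omega)
      rw [hMk k (by omega) hU, Nat.add_sub_cancel, hUB, hU, ← Matrix.mul_assoc A, hAP] at this
      rw [this]
      simp only [Matrix.mul_sub, Matrix.mul_assoc]
      abel
  have key : ∀ (k : ℕ) (hk : k < m), U (k + 1) = P * blockE m p ⟨k, hk⟩ ∧
      ∀ (h : k + 1 < m), U (k + 2) = P * blockE m p ⟨k + 1, h⟩ ∧
      B (k + 2) = (blockE m p ⟨k + 1, h⟩)ᵀ * T * blockE m p ⟨k, hk⟩ := by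
    intro k
    induction k with
    | zero =>
      intro hk
      refine ⟨hU1, fun h => hstep 0 h hU1 ?_⟩
      rw [hB1, Matrix.transpose_zero, Matrix.mul_zero]
      symm
      convert Matrix.mul_zero P
      ext ⟨r, a⟩ b
      simp only [Matrix.sub_apply, aux_E, aux_ETE, Matrix.zero_apply]
      rw [aux_TE]
      by_cases h0 : r = ⟨0, hk⟩
      · subst h0; simp
      · by_cases h1 : r = ⟨0 + 1, h⟩
        · subst h1; simp
        · rw [if_neg h0, if_neg h1, hTtri]
          · simp
          · simp only [Fin.ext_iff] at h0 h1
            simp only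
            omega
    | succ k ih =>
      intro hk
      obtain ⟨ih1, ih2⟩ := ih (by omega)
      obtain ⟨ih3, ih4⟩ := ih2 hk
      refine ⟨ih3, fun h => hstep (k + 1) h ih3 ?_⟩
      rw [ih1, ih4, Matrix.mul_assoc]
      congr 1
      ext ⟨r, a⟩ b
      simp only [Matrix.sub_apply, aux_E, aux_ETE, Matrix.transpose_apply]
      rw [aux_TE]
      have e1 : k ≠ k + 1 + 1 := by omega
      by_cases h0 : r = ⟨k, by omega⟩
      · subst h0
        simp only [Fin.ext_iff]
        simp [hsymm (⟨k, _⟩, a), e1]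
      · by_cases h1 : r = ⟨k + 1, hk⟩
        · subst h1; simp
        · by_cases h2 : r = ⟨k + 1 + 1, h⟩
          · subst h2; simp [e1.symm]
          · rw [if_neg h0, if_neg h1, if_neg h2, hTtri]
            · simp
            · simp only [Fin.ext_iff] at h0 h1 h2
              simp only
              omega
  refine ⟨fun i => (key i i.2).1, fun i a b => ?_, fun i h a b => ?_⟩
  · rw [hMk i i.2 (key i i.2).1, aux_ETE]
  · rw [((key i i.2).2 h).2, aux_ETE]
end
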